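/- Let k be a positive even natural number and let D : (ZMod k → ZMod 2) → (ZMod k → ZMod 2) be the ℤ/2-linear map given by (D x)(j) = x(j-1) + x(j+1) when j is even and (D x)(j) = 0 when j is odd (parity of j ∈ ZMod k meaning parity of its canonical representative, which is well defined since k is even). Then the kernel of D has dimension k/2 + 1 as a vector space over ZMod 2. -/

import Mathlib

/-!
The equations `x (j - 1) = x (j + 1)`, for `j` even, say exactly that `x` takes a single value on
the odd residues, since repeatedly adding `2` to `1` reaches all of them. An element of the kernel
is therefore one scalar together with an arbitrary function on the `k / 2` even residues.
-/

section ConstantOn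

variable (R : Type*) [Semiring R] {ι : Type*}

/-- The submodule of functions `ι → R` that take a single value on the set `s` (and arbitrary values
elsewhere). The pairwise condition covers `s = ∅` without a choice of base point. -/
def constantOn (s : Set ι) : Submodule R (ι → R) where
  carrier := {x | ∀ i ∈ s, ∀ j ∈ s, x i = x j}
  add_mem' hx hy i hi j hj := congrArg₂ (· + ·) (hx i hi j hj) (hy i hi j hj)
  zero_mem' _ _ _ _ := rfl
  smul_mem' c _ hx i hi j hj := congrArg (c * ·) (hx i hi j hj)

variable {R}

theorem mem_constantOn_iff_of_mem {s : Set ι} {i₀ : ι} (hi₀ : i₀ ∈ s) {x : ι → R} :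
    x ∈ constantOn R s ↔ ∀ ⦃i⦄, i ∈ s → x i = x i₀ :=
  ⟨fun hx _ hi ↦ hx _ hi i₀ hi₀, fun hx _ hi _ hj ↦ (hx hi).trans (hx hj).symm⟩

open Classical in
/-- A function that is constant on `s` is determined by its restriction to `sᶜ` and its value at a
point `i₀` of `s`, both of which are arbitrary. -/
noncomputable def constantOnEquiv {s : Set ι} {i₀ : ι} (hi₀ : i₀ ∈ s) :
    constantOn R s ≃ₗ[R] ((sᶜ : Set ι) → R) × R where
  toFun x := (fun i ↦ x.1 i, x.1 i₀)
  map_add' _ _ := rfl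
  map_smul' _ _ := rfl
  invFun p := ⟨fun i ↦ if hi : i ∈ s then p.2 else p.1 ⟨i, hi⟩,
    fun i hi j hj ↦ by simp only [dif_pos hi, dif_pos hj]⟩
  left_inv x := by
    ext i
    by_cases hi : i ∈ s
    · exact (dif_pos hi).trans (x.2 i₀ hi₀ i hi)
    · exact dif_neg hi
  right_inv p := Prod.ext (funext fun i ↦ dif_neg i.2) (dif_pos hi₀)

theorem finrank_constantOn [StrongRankCondition R] [Finite ι] {s : Set ι} (hs : s.Nonempty) :
    Module.finrank R (constantOn R s) = sᶜ.ncard + 1 := by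
  obtain ⟨i₀, hi₀⟩ := hs
  have := Fintype.ofFinite (sᶜ : Set ι)
  rw [(constantOnEquiv hi₀).finrank_eq, Module.finrank_prod, Module.finrank_fintype_fun_eq_card,
    Module.finrank_self, ← Nat.card_eq_fintype_card, Nat.card_coe_set_eq]

end ConstantOn

section Parity

variable {k : ℕ}

theorem zmod_odd_iff_not_even (hk : Even k) (j : ZMod k) : Odd j ↔ ¬ Even j := by
  constructor
  · intro hodd heven
    let f := ZMod.castHom hk.two_dvd (ZMod 2)
    have disjoint_mod_two : ∀ a : ZMod 2, Odd a → ¬ Even a := by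
      unfold Odd Even
      decide
    exact disjoint_mod_two (f j) (hodd.map f) (heven.map f)
  · obtain ⟨n, rfl⟩ := ZMod.intCast_surjective j
    intro not_even
    rcases Int.even_or_odd n with heven | hodd
    · exact absurd (heven.map (Int.castRingHom _)) not_even
    · exact hodd.map (Int.castRingHom _)

theorem zmod_even_val_iff [NeZero k] (hk : Even k) (j : ZMod k) : Even j.val ↔ Even j := by
  constructor
  · intro h
    simpa using h.map (Nat.castRingHom (ZMod k))
  · rintro ⟨r, rfl⟩
    rw [ZMod.val_add]
    exact (Even.add_self r.val).mod_even hk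

theorem zmod_ncard_even [NeZero k] (hk : Even k) : {j : ZMod k | Even j}.ncard = k / 2 := by
  have compl_eq_image : {j : ZMod k | Even j}ᶜ = (· + 1) '' {j : ZMod k | Even j} := by
    ext j
    simp only [Set.mem_compl_iff, Set.mem_ofPred_eq, ← zmod_odd_iff_not_even hk, Set.mem_image]
    exact ⟨fun hj ↦ ⟨j - 1, hj.sub_odd odd_one, sub_add_cancel j 1⟩,
      fun ⟨i, hi, hij⟩ ↦ hij ▸ hi.add_one⟩
  have card_add_card := Set.ncard_add_ncard_compl {j : ZMod k | Even j}
  rw [compl_eq_image, Set.ncard_image_of_injective _ (add_left_injective 1),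
    Nat.card_zmod] at card_add_card
  lia

theorem zmod_apply_eq_apply_one_of_odd {α : Type*} {x : ZMod k → α}
    (hx : ∀ j, Even j → x (j - 1) = x (j + 1)) {j : ZMod k} (hj : Odd j) : x j = x 1 := by
  obtain ⟨r, rfl⟩ := hj
  obtain ⟨n, rfl⟩ := ZMod.intCast_surjective r
  have periodic : Function.Periodic (fun r : ZMod k ↦ x (2 * r + 1)) 1 := fun r ↦ by
    have h := hx (2 * (r + 1)) (even_two_mul _)
    rw [show 2 * (r + 1) - 1 = 2 * r + 1 by ring] at h
    exact h.symm
  simpa using periodic.int_mul_eq n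

theorem zmod_mem_constantOn_odd_iff {R : Type*} [Semiring R] {x : ZMod k → R} :
    x ∈ constantOn R {j : ZMod k | Odd j} ↔ ∀ j, Even j → x (j - 1) = x (j + 1) :=
  ⟨fun hx _ hj ↦ hx _ (hj.sub_odd odd_one) _ hj.add_one,
    fun hx ↦ (mem_constantOn_iff_of_mem (s := {j | Odd j}) odd_one).2 fun _ ↦
      zmod_apply_eq_apply_one_of_odd hx⟩

end Parity

theorem log_floer_kernel_finrank_general {R : Type*} [Ring R] [StrongRankCondition R]
    (k : ℕ) (hk : 0 < k) (hke : Even k)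
    (D : (ZMod k → R) →ₗ[R] (ZMod k → R))
    (hD : ∀ x : ZMod k → R, ∀ j : ZMod k,
      D x j = if Even j.val then x (j - 1) - x (j + 1) else 0) :
    Module.finrank R (LinearMap.ker D) = k / 2 + 1 := by
  have : NeZero k := ⟨hk.ne'⟩
  have ker_eq : LinearMap.ker D = constantOn R {j : ZMod k | Odd j} := by
    ext x
    simp only [LinearMap.mem_ker, funext_iff, hD, zmod_even_val_iff hke, Pi.zero_apply,
      ite_eq_right_iff, sub_eq_zero, zmod_mem_constantOn_odd_iff]
  have compl_odd : {j : ZMod k | Odd j}ᶜ = {j : ZMod k | Even j} := by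
    ext j
    exact (not_congr (zmod_odd_iff_not_even hke j)).trans not_not
  rw [ker_eq, finrank_constantOn ⟨1, odd_one⟩, compl_odd, zmod_ncard_even hke]

/-- The kernel of the combinatorial log Floer differential has dimension `k/2 + 1`. -/
theorem log_floer_kernel_finrank
    (k : ℕ) (hk : 0 < k) (hke : Even k)
    (D : (ZMod k → ZMod 2) →ₗ[ZMod 2] (ZMod k → ZMod 2))
    (hD : ∀ x : ZMod k → ZMod 2, ∀ j : ZMod k,
      D x j = if Even j.val then x (j - 1) + x (j + 1) else 0) :
    Module.finrank (ZMod 2) (LinearMap.ker D) = k / 2 + 1 :=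
  log_floer_kernel_finrank_general k hk hke D (by simpa only [CharTwo.sub_eq_add] using hD)
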